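/- The operators P⁺, P⁻ and P are well-defined bounded linear operators from L²(ℝ,ℂ) to L²(ℝ,ℂ): for every f ∈ L²(ℝ,ℂ) the defining limits exist in L² and the resulting maps are linear and bounded. Moreover, for every real-valued f ∈ L²(ℝ,ℝ) one has P⁺[f] = conj(P⁻[f]) almost everywhere, and for every f ∈ L²(ℝ,ℂ) the Plemelj–Sokhotski identity f = (1/(2πi))(P⁺[f] − P⁻[f]) holds almost everywhere. -/

import Mathlib

/-!
The three operators are Fourier multipliers on `L²`, and the whole argument takes place on the
Fourier side.

With `y = x - x'`, the regularized integrals are convolutions with the kernels `1 / (-y ∓ iδ)`,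
which are the inverse Fourier transforms of `2πi · 1_{ξ>0} · exp(-2πδξ)` and
`-2πi · 1_{ξ<0} · exp(2πδξ)` (`isKernel_plus`, `isKernel_minus`). The truncated kernel
`-1_{|y|≥δ} / y` is the mean of these two plus `δ⁻¹ D(y/δ)`, where `D` is odd and bounded by
`1 / (1 + y²)`; hence `D` is integrable with integral zero, and `𝓕 D (δξ)` is bounded
uniformly in `δ` and tends to `𝓕 D 0 = 0` (`isKernel_pv`).

These kernels are merely square integrable, so each convolution is evaluated pointwise: `(k * f)(x)`
is an `L²` inner product of `f` with a reflected translate of `k`, Plancherel turns it into the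
inverse Fourier integral of `m · 𝓕 f`, and for functions in `L¹ ∩ L²` that integral agrees with the
`L²` transform (`fourierInv_toLp_ae`, `IsKernel.conv_ae`). If the symbols are uniformly bounded and
converge almost everywhere, Plancherel and dominated convergence give `L²` convergence
(`tendsto_conv`).

The Plemelj–Sokhotski identity holds because the limiting symbols of `P⁺` and `P⁻` differ by `2πi`
off `ξ = 0`. The conjugation identity holds for each `δ > 0` at the level of the integrals and
passes to the limit.
-/

open MeasureTheory Filter
open scoped FourierTransform ComplexConjugate Topology ENNReal SchwartzMap

namespace PlemeljL2

/-- The Hilbert space `L²(ℝ, ℂ)`. -/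
noncomputable abbrev L2R := Lp ℂ 2 (volume : Measure ℝ)

/-! ### The `L²` Fourier transform on `L¹ ∩ L²` -/

/-- On `L¹ ∩ L²` the `L²` Fourier transform is given by the Fourier integral: both represent the same
tempered distribution. -/
theorem fourier_toLp_ae {g : ℝ → ℂ} (h1 : Integrable g) (h2 : MemLp g 2) :
    (𝓕 (h2.toLp g) : L2R) =ᵐ[volume] 𝓕 g := by
  apply ae_eq_of_integral_contDiff_smul_eq
  · exact (Lp.memLp _).locallyIntegrable one_le_two
  · exact (VectorFourier.fourierIntegral_continuous Real.continuous_fourierChar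
      (L := innerₗ ℝ) continuous_inner h1).locallyIntegrable
  intro φ hφ hφc
  have hc : HasCompactSupport (Complex.ofRealCLM ∘ φ) := hφc.comp_left rfl
  have hd : ContDiff ℝ (⊤ : ℕ∞) (Complex.ofRealCLM ∘ φ) := by fun_prop
  have key := congrArg (fun T => T (hc.toSchwartzMap hd))
    (Lp.fourier_toTemperedDistribution_eq (h2.toLp g))
  simp only [TemperedDistribution.fourier_apply, Lp.toTemperedDistribution_apply] at key
  have e1 := VectorFourier.integral_fourierIntegral_smul_eq_flip (L := innerₗ ℝ)
    Real.continuous_fourierChar continuous_inner ((hc.toSchwartzMap hd).integrable (μ := volume)) (ν := volume) h1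
  calc _ = ∫ x, (hc.toSchwartzMap hd) x • (𝓕 (h2.toLp g) : L2R) x := by
        simp
    _ = ∫ x, (𝓕 (hc.toSchwartzMap hd)) x • h2.toLp g x := key.symm
    _ = ∫ x, (𝓕 (hc.toSchwartzMap hd)) x • g x := by
        apply integral_congr_ae
        filter_upwards [h2.coeFn_toLp] with x hx
        rw [hx]
    _ = ∫ x, (hc.toSchwartzMap hd) x • 𝓕 g x := by simpa using! e1
    _ = _ := by simp

/-- Inverse transform version of `fourier_toLp_ae`. -/
theorem fourierInv_toLp_ae {g : ℝ → ℂ} (h1 : Integrable g) (h2 : MemLp g 2) :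
    (𝓕⁻ (h2.toLp g) : L2R) =ᵐ[volume] 𝓕⁻ g := by
  have hL : Continuous fun p : ℝ × ℝ ↦ (-innerₗ ℝ) p.1 p.2 := by
    simp only [LinearMap.neg_apply]; exact continuous_inner.neg
  apply ae_eq_of_integral_contDiff_smul_eq
  · exact (Lp.memLp _).locallyIntegrable one_le_two
  · exact (VectorFourier.fourierIntegral_continuous Real.continuous_fourierChar
      (L := -innerₗ ℝ) hL h1).locallyIntegrable
  intro φ hφ hφc
  have hc : HasCompactSupport (Complex.ofRealCLM ∘ φ) := hφc.comp_left rfl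
  have hd : ContDiff ℝ (⊤ : ℕ∞) (Complex.ofRealCLM ∘ φ) := by fun_prop
  have key := congrArg (fun T => T (hc.toSchwartzMap hd))
    (Lp.fourierInv_toTemperedDistribution_eq (h2.toLp g))
  simp only [TemperedDistribution.fourierInv_apply, Lp.toTemperedDistribution_apply] at key
  have e1 := VectorFourier.integral_fourierIntegral_smul_eq_flip (L := -innerₗ ℝ)
    Real.continuous_fourierChar hL ((hc.toSchwartzMap hd).integrable (μ := volume)) (ν := volume) h1
  have hflip : (-innerₗ ℝ : ℝ →ₗ[ℝ] ℝ →ₗ[ℝ] ℝ).flip = -innerₗ ℝ := by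
    ext; simp
  rw [hflip] at e1
  calc _ = ∫ x, (hc.toSchwartzMap hd) x • (𝓕⁻ (h2.toLp g) : L2R) x := by
        simp
    _ = ∫ x, (𝓕⁻ (hc.toSchwartzMap hd)) x • h2.toLp g x := key.symm
    _ = ∫ x, (𝓕⁻ (hc.toSchwartzMap hd)) x • g x := by
        apply integral_congr_ae
        filter_upwards [h2.coeFn_toLp] with x hx
        rw [hx]
    _ = ∫ x, (hc.toSchwartzMap hd) x • 𝓕⁻ g x := by
        simp only [SchwartzMap.fourierInv_coe]; exact e1
    _ = _ := by simp

theorem fourier_sub_L2 (f g : L2R) : (𝓕 (f - g) : L2R) = 𝓕 f - 𝓕 g :=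
  (Lp.fourierTransformₗᵢ ℝ ℂ).map_sub f g

/-! ### Fourier multipliers and their convolution kernels -/

/-- The Fourier multiplier `f ↦ 𝓕⁻ (m · 𝓕 f)` on `L²` with essentially bounded symbol `m`. -/
noncomputable def multOp (m : ℝ → ℂ) (hm : MemLp m ∞) : L2R →L[ℂ] L2R :=
  (Lp.fourierTransformₗᵢ ℝ ℂ).symm.toContinuousLinearEquiv.toContinuousLinearMap ∘L
    ((ContinuousLinearMap.mul ℂ ℂ).holderL volume ∞ 2 2 (hm.toLp m)) ∘L
    (Lp.fourierTransformₗᵢ ℝ ℂ).toContinuousLinearEquiv.toContinuousLinearMap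

theorem fourier_multOp (m : ℝ → ℂ) (hm : MemLp m ∞) (f : L2R) :
    (𝓕 (multOp m hm f) : L2R) =ᵐ[volume] fun ξ => m ξ * (𝓕 f : L2R) ξ := by
  have : 𝓕 (multOp m hm f) = (ContinuousLinearMap.mul ℂ ℂ).holder 2 (hm.toLp m) (𝓕 f : L2R) :=
    (Lp.fourierTransformₗᵢ ℝ ℂ).apply_symm_apply _
  rw [this]
  filter_upwards [(ContinuousLinearMap.mul ℂ ℂ).coeFn_holder (r := 2) (hm.toLp m) (𝓕 f : L2R),
    hm.coeFn_toLp] with ξ h1 h2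
  rw [h1, h2]; rfl

/-- `k` is a square-integrable convolution kernel with Fourier transform `m`. This is encoded as the
description of the Fourier transform of every reflected translate `y ↦ conj (k (x - y))`, which is
the vector whose inner product with `f` is `(k * f)(x)`. -/
def IsKernel (k m : ℝ → ℂ) : Prop :=
  ∀ x : ℝ, ∃ h : L2R, (h =ᵐ[volume] fun y => conj (k (x - y))) ∧
    ((𝓕 h : L2R) =ᵐ[volume] fun ξ => conj (m ξ * Real.fourierChar (ξ * x)))

theorem IsKernel.add {k₁ k₂ m₁ m₂ : ℝ → ℂ} (h₁ : IsKernel k₁ m₁) (h₂ : IsKernel k₂ m₂) :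
    IsKernel (fun y => k₁ y + k₂ y) (fun ξ => m₁ ξ + m₂ ξ) := by
  intro x
  obtain ⟨a, ha, ha'⟩ := h₁ x
  obtain ⟨b, hb, hb'⟩ := h₂ x
  refine ⟨a + b, ?_, ?_⟩
  · filter_upwards [Lp.coeFn_add a b, ha, hb] with y h1 h2 h3
    rw [h1, Pi.add_apply, h2, h3]; simp
  · rw [FourierTransform.fourier_add]
    filter_upwards [Lp.coeFn_add (𝓕 a : L2R) (𝓕 b : L2R), ha', hb'] with y h1 h2 h3
    rw [h1, Pi.add_apply, h2, h3]; simp [add_mul]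

theorem IsKernel.const_mul {k m : ℝ → ℂ} (h : IsKernel k m) (c : ℂ) :
    IsKernel (fun y => c * k y) (fun ξ => c * m ξ) := by
  intro x
  obtain ⟨a, ha, ha'⟩ := h x
  refine ⟨conj c • a, ?_, ?_⟩
  · filter_upwards [Lp.coeFn_smul (conj c) a, ha] with y h1 h2
    simp [h1, h2]
  · rw [FourierTransform.fourier_smul]
    filter_upwards [Lp.coeFn_smul (conj c) (𝓕 a : L2R), ha'] with y h1 h2
    simp [h1, h2, mul_assoc]

theorem IsKernel.memLp {k m : ℝ → ℂ} (h : IsKernel k m) : MemLp m 2 := by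
  obtain ⟨a, -, ha⟩ := h 0
  have := (MemLp.ae_eq ha (Lp.memLp _)).star
  refine this.ae_eq (Eventually.of_forall fun ξ => ?_)
  simp

/-- Convolution with a kernel is the Fourier multiplier with its symbol. -/
theorem IsKernel.conv_ae {k m : ℝ → ℂ} (h : IsKernel k m) (hm : MemLp m ∞) (f : L2R) :
    (fun x => ∫ y, k (x - y) * f y) =ᵐ[volume] multOp m hm f := by
  have i1 : Integrable fun ξ => m ξ * (𝓕 f : L2R) ξ := h.memLp.integrable_mul (Lp.memLp _)
  have i2 : MemLp (fun ξ => m ξ * (𝓕 f : L2R) ξ) 2 :=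
    MemLp.ae_eq (fourier_multOp m hm f) (Lp.memLp _)
  have e : multOp m hm f = 𝓕⁻ (i2.toLp _) := by
    have : i2.toLp _ = 𝓕 (multOp m hm f) := by
      apply Lp.ext
      exact i2.coeFn_toLp.trans (fourier_multOp m hm f).symm
    rw [this, FourierTransform.fourierInv_fourier_eq]
  rw [e]
  refine EventuallyEq.trans (Eventually.of_forall fun x => ?_) (fourierInv_toLp_ae i1 i2).symm
  obtain ⟨a, ha, ha'⟩ := h x
  have hin := Lp.inner_fourier_eq a f
  rw [L2.inner_def, L2.inner_def] at hin
  calc ∫ y, k (x - y) * f y = ∫ y, inner ℂ (a y) (f y) := by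
        apply integral_congr_ae
        filter_upwards [ha] with y hy
        simp [hy, mul_comm]
    _ = ∫ ξ, inner ℂ ((𝓕 a : L2R) ξ) ((𝓕 f : L2R) ξ) := hin.symm
    _ = 𝓕⁻ (fun ξ => m ξ * (𝓕 f : L2R) ξ) x := by
        rw [Real.fourierInv_eq]
        apply integral_congr_ae
        filter_upwards [ha'] with ξ hξ
        rw [hξ]
        simp [Circle.smul_def, mul_comm x ξ]
        ring

/-- If the symbols `m δ` are uniformly bounded and converge almost everywhere to `m₀`, the convolutions
with their kernels converge strongly in `L²` to the multiplier with symbol `m₀`. -/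
theorem tendsto_conv {k m : ℝ → ℝ → ℂ} {m₀ : ℝ → ℂ} (C : ℝ) (hm₀ : MemLp m₀ ∞)
    (hk : ∀ δ, 0 < δ → IsKernel (k δ) (m δ))
    (hC : ∀ δ, 0 < δ → ∀ ξ, ‖m δ ξ‖ ≤ C)
    (hlim : ∀ᵐ ξ, Tendsto (fun δ => m δ ξ) (𝓝[>] 0) (𝓝 (m₀ ξ))) (f : L2R) :
    Tendsto (fun δ => eLpNorm (fun x => (∫ y, k δ (x - y) * f y) - multOp m₀ hm₀ f x) 2 volume)
      (𝓝[>] 0) (𝓝 0) := by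
  have hpos : ∀ᶠ δ : ℝ in 𝓝[>] 0, 0 < δ := self_mem_nhdsWithin
  have hm : ∀ δ, 0 < δ → MemLp (m δ) ∞ := fun δ hδ =>
    memLp_top_of_bound (hk δ hδ).memLp.1 C (Eventually.of_forall (hC δ hδ))
  have hC₀ : ∀ᵐ ξ, ‖m₀ ξ‖ ≤ C := by
    filter_upwards [hlim] with ξ hξ
    exact le_of_tendsto hξ.norm (hpos.mono fun δ hδ => hC δ hδ ξ)
  have hF : MemLp (𝓕 f : L2R) 2 := Lp.memLp _
  -- By Plancherel the error is measured on the Fourier side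
  have e : ∀ δ, 0 < δ →
      eLpNorm (fun x => (∫ y, k δ (x - y) * f y) - multOp m₀ hm₀ f x) 2 volume =
      (∫⁻ ξ, ‖(m δ ξ - m₀ ξ) * (𝓕 f : L2R) ξ‖ₑ ^ (2 : ℝ)) ^ (1 / 2 : ℝ) := by
    intro δ hδ
    have h1 : (fun x => (∫ y, k δ (x - y) * f y) - multOp m₀ hm₀ f x) =ᵐ[volume]
        (multOp (m δ) (hm δ hδ) f - multOp m₀ hm₀ f : L2R) := by
      filter_upwards [(hk δ hδ).conv_ae (hm δ hδ) f,
        Lp.coeFn_sub (multOp (m δ) (hm δ hδ) f) (multOp m₀ hm₀ f)] with x h1 h2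
      rw [h2, h1]; rfl
    have h2 : (𝓕 (multOp (m δ) (hm δ hδ) f - multOp m₀ hm₀ f) : L2R) =ᵐ[volume]
        fun ξ => (m δ ξ - m₀ ξ) * (𝓕 f : L2R) ξ := by
      rw [fourier_sub_L2]
      filter_upwards [Lp.coeFn_sub (𝓕 (multOp (m δ) (hm δ hδ) f) : L2R) (𝓕 (multOp m₀ hm₀ f) : L2R),
        fourier_multOp (m δ) (hm δ hδ) f, fourier_multOp m₀ hm₀ f] with x h1 h2 h3
      rw [h1, Pi.sub_apply, h2, h3]; ring
    rw [eLpNorm_congr_ae h1, ← Lp.enorm_def, ← ofReal_norm, ← Lp.norm_fourier_eq, ofReal_norm,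
      Lp.enorm_def, eLpNorm_congr_ae h2, eLpNorm_eq_lintegral_rpow_enorm_toReal (by simp) (by simp)]
    simp
  refine Tendsto.congr' (f₁ := fun δ =>
    (∫⁻ ξ, ‖(m δ ξ - m₀ ξ) * (𝓕 f : L2R) ξ‖ₑ ^ (2 : ℝ)) ^ (1 / 2 : ℝ))
    (hpos.mono fun δ hδ => (e δ hδ).symm) ?_
  have h0 : Tendsto (fun δ => ∫⁻ ξ, ‖(m δ ξ - m₀ ξ) * (𝓕 f : L2R) ξ‖ₑ ^ (2 : ℝ)) (𝓝[>] 0)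
      (𝓝 (∫⁻ _ : ℝ, 0)) := by
    refine tendsto_lintegral_filter_of_dominated_convergence'
      (fun ξ => ‖((2 * C : ℝ) : ℂ) * (𝓕 f : L2R) ξ‖ₑ ^ (2 : ℝ)) ?_ ?_ ?_ ?_
    · filter_upwards [hpos] with δ hδ
      exact ((((hm δ hδ).1.sub hm₀.1).mul hF.1).enorm).pow_const _
    · filter_upwards [hpos] with δ hδ
      filter_upwards [hC₀] with ξ hξ
      gcongr
      rw [enorm_mul, enorm_mul]
      gcongr
      rw [enorm_le_iff_norm_le, Complex.norm_real]
      refine (norm_sub_le _ _).trans (le_trans ?_ (le_abs_self _))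
      linarith [hC δ hδ ξ]
    · have := (hF.const_mul ((2 * C : ℝ) : ℂ)).eLpNorm_lt_top
      rw [eLpNorm_lt_top_iff_lintegral_rpow_enorm_lt_top (by simp) (by simp)] at this
      simpa using this.ne
    · filter_upwards [hlim] with ξ hξ
      have : Tendsto (fun δ => (m δ ξ - m₀ ξ) * (𝓕 f : L2R) ξ) (𝓝[>] 0) (𝓝 0) := by
        simpa using (hξ.sub_const (m₀ ξ)).mul_const ((𝓕 f : L2R) ξ)
      have h2 := (ENNReal.continuous_rpow_const (y := 2)).tendsto _ |>.comp this.enorm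
      simpa [Function.comp_def] using h2
  have h2 := (ENNReal.continuous_rpow_const (y := 1 / 2)).tendsto _ |>.comp h0
  simpa [Function.comp_def] using h2

theorem memLp_two_of_bound {g : ℝ → ℂ} (hg : Integrable g) {C : ℝ} (hC : ∀ x, ‖g x‖ ≤ C) :
    MemLp g 2 := by
  rw [memLp_two_iff_integrable_sq_norm hg.1]
  refine (hg.norm.const_mul C).mono' (hg.1.norm.pow 2) (Eventually.of_forall fun x => ?_)
  rw [Real.norm_of_nonneg (by positivity), sq]
  exact mul_le_mul_of_nonneg_right (hC x) (norm_nonneg _)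

/-! ### The kernels of `P⁺` and `P⁻` -/

/-- The symbol `2πi · 1_{ξ>0} · exp(-2πδξ)` of the regularization of `P⁺`; at `δ = 0`, that of `P⁺`. -/
noncomputable def symbPlus (δ ξ : ℝ) : ℂ :=
  if 0 < ξ then 2 * Real.pi * Complex.I * Complex.exp (-(2 * Real.pi * δ * ξ)) else 0

/-- The symbol `-2πi · 1_{ξ<0} · exp(2πδξ)` of the regularization of `P⁻`; at `δ = 0`, that of `P⁻`. -/
noncomputable def symbMinus (δ ξ : ℝ) : ℂ :=
  if ξ < 0 then -(2 * Real.pi * Complex.I * Complex.exp (2 * Real.pi * δ * ξ)) else 0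

theorem measurable_symbPlus (δ : ℝ) : Measurable (symbPlus δ) := by
  unfold symbPlus
  exact Measurable.ite measurableSet_Ioi (by fun_prop) measurable_const

theorem measurable_symbMinus (δ : ℝ) : Measurable (symbMinus δ) := by
  unfold symbMinus
  exact Measurable.ite measurableSet_Iio (by fun_prop) measurable_const

theorem norm_symbPlus_le {δ : ℝ} (hδ : 0 ≤ δ) (ξ : ℝ) : ‖symbPlus δ ξ‖ ≤ 2 * Real.pi := by
  unfold symbPlus
  split_ifs with h
  · have h1 : ‖Complex.exp (-(2 * Real.pi * δ * ξ))‖ ≤ 1 := by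
      rw [Complex.norm_exp]
      simp only [Real.exp_le_one_iff]
      have : 0 ≤ 2 * Real.pi * δ * ξ := by positivity
      simpa using this
    simp only [norm_mul, Complex.norm_I, Complex.norm_real, Complex.norm_ofNat, mul_one,
      Real.norm_of_nonneg Real.pi_pos.le]
    nlinarith [Real.pi_pos]
  · simp; positivity

theorem symbMinus_eq (δ ξ : ℝ) : symbMinus δ ξ = -symbPlus δ (-ξ) := by
  unfold symbMinus symbPlus
  simp only [Left.neg_pos_iff]
  split_ifs <;> simp

theorem norm_symbMinus_le {δ : ℝ} (hδ : 0 ≤ δ) (ξ : ℝ) : ‖symbMinus δ ξ‖ ≤ 2 * Real.pi := by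
  rw [symbMinus_eq, norm_neg]; exact norm_symbPlus_le hδ _

theorem integrable_symbPlus {δ : ℝ} (hδ : 0 < δ) : Integrable (symbPlus δ) := by
  have : symbPlus δ = (Set.Ioi 0).indicator
      fun ξ : ℝ => 2 * Real.pi * Complex.I * Complex.exp ((-(2 * Real.pi * δ) : ℂ) * ξ) := by
    ext ξ
    simp [symbPlus, Set.indicator_apply]
  rw [this, integrable_indicator_iff measurableSet_Ioi]
  refine (integrableOn_exp_mul_complex_Ioi ?_ 0).const_mul _
  simp; positivity

theorem integrable_symbMinus {δ : ℝ} (hδ : 0 < δ) : Integrable (symbMinus δ) := by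
  have := (integrable_symbPlus hδ).comp_neg.neg
  exact this.congr (Eventually.of_forall fun ξ => (symbMinus_eq δ ξ).symm)

/-- A bounded integrable symbol has its inverse Fourier integral as kernel. -/
theorem isKernel_of_fourierInv {k m : ℝ → ℂ} (h1 : Integrable m) {C : ℝ} (hC : ∀ ξ, ‖m ξ‖ ≤ C)
    (hk : ∀ y, 𝓕⁻ m y = k y) : IsKernel k m := by
  intro x
  set g : ℝ → ℂ := fun ξ => conj (m ξ * Real.fourierChar (ξ * x)) with hg
  have hnorm : ∀ ξ, ‖g ξ‖ = ‖m ξ‖ := fun ξ => by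
    rw [hg, RCLike.norm_conj, norm_mul, Circle.norm_coe, mul_one]
  have hch : Continuous fun ξ : ℝ => ((Real.fourierChar (ξ * x) : Circle) : ℂ) := by
    fun_prop
  have hgm : AEStronglyMeasurable g :=
    Complex.continuous_conj.comp_aestronglyMeasurable (h1.1.mul hch.aestronglyMeasurable)
  have g1 : Integrable g := h1.mono hgm (Eventually.of_forall fun ξ => (hnorm ξ).le)
  have g2 : MemLp g 2 := memLp_two_of_bound g1 (C := C) fun ξ => (hnorm ξ).trans_le (hC ξ)
  refine ⟨𝓕⁻ (g2.toLp g), ?_, ?_⟩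
  · refine (fourierInv_toLp_ae g1 g2).trans (Eventually.of_forall fun y => ?_)
    change 𝓕⁻ g y = conj (k (x - y))
    rw [← hk, Real.fourierInv_eq, Real.fourierInv_eq, ← integral_conj]
    congr 1
    ext ξ
    simp only [hg, Circle.smul_def, smul_eq_mul, map_mul]
    simp only [Circle.starRingEnd_addChar, RCLike.inner_apply, conj_trivial]
    rw [mul_left_comm, ← Circle.coe_mul, ← AddChar.map_add_eq_mul, mul_comm]
    congr 3
    ring
  · rw [FourierTransform.fourier_fourierInv_eq]
    exact g2.coeFn_toLp

theorem isKernel_plus {δ : ℝ} (hδ : 0 < δ) :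
    IsKernel (fun y => 1 / (-(y : ℂ) - Complex.I * δ)) (symbPlus δ) := by
  refine isKernel_of_fourierInv (integrable_symbPlus hδ) (norm_symbPlus_le hδ.le) fun y => ?_
  set a : ℂ := -(2 * Real.pi * δ) + 2 * Real.pi * y * Complex.I with ha
  have hre : a.re < 0 := by simp [ha]; positivity
  have : 𝓕⁻ (symbPlus δ) y = ∫ ξ in Set.Ioi (0 : ℝ), 2 * Real.pi * Complex.I * Complex.exp (a * ξ) := by
    rw [Real.fourierInv_eq', ← integral_indicator measurableSet_Ioi]
    congr 1
    ext ξ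
    simp only [symbPlus, Set.indicator_apply, Set.mem_Ioi]
    split_ifs
    · rw [smul_eq_mul, mul_left_comm, ← Complex.exp_add]
      congr 2
      simp [ha]; ring
    · simp
  rw [this, integral_const_mul, integral_exp_mul_complex_Ioi hre]
  have ha0 : a ≠ 0 := fun h => by simp [h] at hre
  have hb : -(y : ℂ) - Complex.I * δ ≠ 0 := fun h => by
    have := congrArg Complex.im h
    simp at this; exact hδ.ne' this
  simp only [Complex.ofReal_zero, mul_zero, Complex.exp_zero]
  field_simp
  rw [ha]; ring_nf; simp; ring

theorem isKernel_minus {δ : ℝ} (hδ : 0 < δ) :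
    IsKernel (fun y => 1 / (-(y : ℂ) + Complex.I * δ)) (symbMinus δ) := by
  refine isKernel_of_fourierInv (integrable_symbMinus hδ) (norm_symbMinus_le hδ.le) fun y => ?_
  set a : ℂ := 2 * Real.pi * δ + 2 * Real.pi * y * Complex.I with ha
  have hre : 0 < a.re := by simp [ha]; positivity
  have : 𝓕⁻ (symbMinus δ) y = ∫ ξ in Set.Iic (0 : ℝ), -(2 * Real.pi * Complex.I) * Complex.exp (a * ξ) := by
    rw [Real.fourierInv_eq', integral_Iic_eq_integral_Iio, ← integral_indicator measurableSet_Iio]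
    congr 1
    ext ξ
    simp only [symbMinus, Set.indicator_apply, Set.mem_Iio]
    split_ifs
    · rw [smul_eq_mul, neg_mul, mul_neg, mul_left_comm, ← Complex.exp_add]
      congr 3
      simp [ha]; ring
    · simp
  rw [this, integral_const_mul, integral_exp_mul_complex_Iic hre]
  have ha0 : a ≠ 0 := fun h => by simp [h] at hre
  have hb : -(y : ℂ) + Complex.I * δ ≠ 0 := fun h => by
    have := congrArg Complex.im h
    simp at this; exact hδ.ne' this
  simp only [Complex.ofReal_zero, mul_zero, Complex.exp_zero]
  field_simp
  rw [ha]; ring_nf; simp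

theorem tendsto_symbPlus (ξ : ℝ) :
    Tendsto (fun δ => symbPlus δ ξ) (𝓝[>] 0) (𝓝 (symbPlus 0 ξ)) := by
  have : Continuous fun δ => symbPlus δ ξ := by
    unfold symbPlus
    split_ifs <;> fun_prop
  exact this.continuousAt.tendsto.mono_left nhdsWithin_le_nhds

theorem tendsto_symbMinus (ξ : ℝ) :
    Tendsto (fun δ => symbMinus δ ξ) (𝓝[>] 0) (𝓝 (symbMinus 0 ξ)) := by
  simp only [symbMinus_eq]
  exact (tendsto_symbPlus (-ξ)).neg

/-! ### The truncated kernel -/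

/-- The difference between the truncated kernel `-1_{|y|≥1} / y` and the conjugate Poisson kernel
`-y / (y² + 1)`, at scale `δ = 1`. -/
noncomputable def corr (y : ℝ) : ℝ := y / (y ^ 2 + 1) - if 1 ≤ |y| then 1 / y else 0

theorem abs_corr_le (y : ℝ) : |corr y| ≤ (1 + y ^ 2)⁻¹ := by
  unfold corr
  have hp : 0 < y ^ 2 + 1 := by positivity
  split_ifs with h
  · have hy : y ≠ 0 := by rintro rfl; norm_num at h
    have : y / (y ^ 2 + 1) - 1 / y = -(1 / (y * (y ^ 2 + 1))) := by field_simp; ring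
    rw [this, abs_neg, abs_div, abs_mul, abs_of_pos hp, abs_one, inv_eq_one_div, add_comm 1]
    apply one_div_le_one_div_of_le hp
    nlinarith
  · rw [sub_zero, abs_div, abs_of_pos hp, inv_eq_one_div, add_comm 1]
    gcongr
    exact (not_le.mp h).le

theorem corr_neg (y : ℝ) : corr (-y) = -corr y := by
  unfold corr
  simp only [abs_neg]
  split_ifs <;> ring

theorem measurable_corr : Measurable corr := by
  unfold corr
  refine Measurable.sub (by fun_prop) (Measurable.ite ?_ (by fun_prop) measurable_const)
  exact measurableSet_le measurable_const (by fun_prop)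

/-- `corr` with complex values. -/
noncomputable def corrC (y : ℝ) : ℂ := (corr y : ℂ)

theorem norm_corrC_le (y : ℝ) : ‖corrC y‖ ≤ (1 + y ^ 2)⁻¹ := by
  rw [corrC, Complex.norm_real]; exact abs_corr_le y

theorem integrable_corrC : Integrable corrC :=
  integrable_inv_one_add_sq.mono' (Complex.measurable_ofReal.comp measurable_corr).aestronglyMeasurable
    (Eventually.of_forall norm_corrC_le)

theorem continuous_fourier_corrC : Continuous (𝓕 corrC) :=
  VectorFourier.fourierIntegral_continuous Real.continuous_fourierChar
      (L := innerₗ ℝ) continuous_inner integrable_corrC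

theorem norm_fourier_corrC_le (ξ : ℝ) : ‖𝓕 corrC ξ‖ ≤ ∫ y, ‖corrC y‖ :=
  VectorFourier.norm_fourierIntegral_le_integral_norm _ _ _ _ _

/-- The function `corr` is odd, so its integral vanishes. -/
theorem fourier_corrC_zero : 𝓕 corrC 0 = 0 := by
  have h : 𝓕 corrC 0 = ∫ y, corrC y := by simp [Real.fourier_eq]
  rw [h]
  have h2 : ∫ y, corrC (-y) = ∫ y, corrC y := integral_neg_eq_self corrC volume
  have h3 : ∫ y, corrC (-y) = -∫ y, corrC y := by
    rw [← integral_neg]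
    simp [corrC, corr_neg]
  rw [h3] at h2
  linear_combination -h2 / 2

/-- The dilate `δ⁻¹ D(·/δ)` of `D = corr` has symbol `𝓕 D (δ ξ)`. -/
theorem isKernel_corr {δ : ℝ} (hδ : 0 < δ) :
    IsKernel (fun y => (δ : ℂ)⁻¹ * corrC (y / δ)) (fun ξ => 𝓕 corrC (δ * ξ)) := by
  intro x
  set g : ℝ → ℂ := fun y => conj ((δ : ℂ)⁻¹ * corrC ((x - y) / δ)) with hg
  have g0 : ∀ y, g y = (δ : ℂ)⁻¹ * corrC ((x - y) / δ) := fun y => by simp [hg, corrC]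
  have g1 : Integrable g := by
    have := ((integrable_corrC.comp_div hδ.ne').comp_sub_left x).const_mul (δ : ℂ)⁻¹
    exact this.congr (Eventually.of_forall fun y => (g0 y).symm)
  have g2 : MemLp g 2 := by
    refine memLp_two_of_bound g1 (C := δ⁻¹) fun y => ?_
    rw [g0, norm_mul, norm_inv, Complex.norm_real, Real.norm_of_nonneg hδ.le]
    refine mul_le_of_le_one_right (by positivity) ((norm_corrC_le _).trans ?_)
    apply inv_le_one_of_one_le₀
    nlinarith [sq_nonneg ((x - y) / δ)]
  refine ⟨g2.toLp g, g2.coeFn_toLp, (fourier_toLp_ae g1 g2).trans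
    (Eventually.of_forall fun ξ => ?_)⟩
  change 𝓕 g ξ = conj (𝓕 corrC (δ * ξ) * Real.fourierChar (ξ * x))
  -- Substitute `y = x - δ z`
  have s1 : 𝓕 g ξ = ∫ z, (δ : ℂ)⁻¹ * (Real.fourierChar (-((x - z) * ξ)) * corrC (z / δ)) := by
    rw [Real.fourier_eq, ← integral_sub_left_eq_self _ volume x]
    congr 1
    ext z
    simp only [g0, Circle.smul_def, smul_eq_mul, RCLike.inner_apply, conj_trivial, sub_sub_cancel]
    rw [mul_left_comm, mul_comm ξ]
  have s2 := Measure.integral_comp_div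
    (fun z => (δ : ℂ)⁻¹ * (Real.fourierChar (-((x - δ * z) * ξ)) * corrC z)) δ
  have s3 : ∀ z : ℝ, δ * (z / δ) = z := fun z => by field_simp
  simp only [s3] at s2
  rw [s1, s2, Real.fourier_eq, ← integral_smul, map_mul, ← integral_conj, ← integral_mul_const]
  congr 1
  ext z
  have hδ' : (δ : ℂ) ≠ 0 := by exact_mod_cast hδ.ne'
  simp only [Circle.smul_def, smul_eq_mul, map_mul, RCLike.inner_apply, conj_trivial,
    Circle.starRingEnd_addChar, abs_of_pos hδ, Complex.real_smul, corrC, Complex.conj_ofReal]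
  rw [mul_inv_cancel_left₀ hδ', mul_right_comm, ← Circle.coe_mul, ← AddChar.map_add_eq_mul]
  congr 3
  ring

/-- The symbol of the kernel truncated at `δ`; at `δ = 0`, that of the principal value operator. -/
noncomputable def symbPV (δ ξ : ℝ) : ℂ :=
  1 / 2 * (symbPlus δ ξ + symbMinus δ ξ) + 𝓕 corrC (δ * ξ)

theorem isKernel_pv {δ : ℝ} (hδ : 0 < δ) :
    IsKernel (fun y => if δ ≤ |y| then 1 / (-(y : ℂ)) else 0) (symbPV δ) := by
  have h := (((isKernel_plus hδ).add (isKernel_minus hδ)).const_mul (1 / 2)).add (isKernel_corr hδ)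
  refine Eq.subst (motive := fun k => IsKernel k (symbPV δ)) (funext fun y => ?_) h
  symm
  have e1 : (-(y : ℂ) - Complex.I * δ) ≠ 0 := fun h => by
    have := congrArg Complex.im h
    simp at this; exact hδ.ne' this
  have e2 : (-(y : ℂ) + Complex.I * δ) ≠ 0 := fun h => by
    have := congrArg Complex.im h
    simp at this; exact hδ.ne' this
  have e3 : ((y : ℂ) ^ 2 + δ ^ 2) ≠ 0 := by
    have : y ^ 2 + δ ^ 2 ≠ 0 := by positivity
    exact_mod_cast this
  have hδ' : (δ : ℂ) ≠ 0 := by exact_mod_cast hδ.ne'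
  have e4 : 1 / 2 * (1 / (-(y : ℂ) - Complex.I * δ) + 1 / (-(y : ℂ) + Complex.I * δ))
      = -(y / ((y : ℂ) ^ 2 + δ ^ 2)) := by
    field_simp
    ring_nf
    simp
  have e5 : (1 ≤ |y / δ|) ↔ δ ≤ |y| := by
    rw [abs_div, abs_of_pos hδ, le_div_iff₀ hδ, one_mul]
  rw [e4, corrC, corr]
  simp only [e5]
  split_ifs with hy
  · have hy0 : y ≠ 0 := by rintro rfl; simp at hy; linarith
    have hy0' : (y : ℂ) ≠ 0 := by exact_mod_cast hy0
    push_cast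
    field_simp
    ring
  · push_cast
    field_simp
    ring

end PlemeljL2

/-! ### Boundedness, conjugation and the Plemelj–Sokhotski identity -/

open PlemeljL2 in
/-- The operators `P⁺`, `P⁻` and `P` are well-defined bounded linear
operators from `L²(ℝ,ℂ)` to `L²(ℝ,ℂ)`: for every `f ∈ L²` the defining limits (as `δ → 0⁺`)
exist in `L²`, and the resulting maps are linear and bounded (i.e. they are continuous linear
maps).  Moreover `P⁺[f] = conj (P⁻[f])` a.e. for real-valued `f`, and the Plemelj–Sokhotski
identity `f = (1/(2πi)) (P⁺[f] − P⁻[f])` holds a.e. -/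
theorem statement0 :
    ∃ (Pplus Pminus P :
        Lp ℂ 2 (volume : Measure ℝ) →L[ℂ] Lp ℂ 2 (volume : Measure ℝ)),
      (∀ f : Lp ℂ 2 (volume : Measure ℝ),
        Tendsto (fun δ : ℝ =>
            eLpNorm (fun x : ℝ =>
              (∫ x' : ℝ, f x' / ((x' : ℂ) - (x : ℂ) - Complex.I * (δ : ℂ))) - Pplus f x)
              2 volume)
          (nhdsWithin 0 (Set.Ioi 0)) (nhds 0)) ∧
      (∀ f : Lp ℂ 2 (volume : Measure ℝ),
        Tendsto (fun δ : ℝ =>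
            eLpNorm (fun x : ℝ =>
              (∫ x' : ℝ, f x' / ((x' : ℂ) - (x : ℂ) + Complex.I * (δ : ℂ))) - Pminus f x)
              2 volume)
          (nhdsWithin 0 (Set.Ioi 0)) (nhds 0)) ∧
      (∀ f : Lp ℂ 2 (volume : Measure ℝ),
        Tendsto (fun δ : ℝ =>
            eLpNorm (fun x : ℝ =>
              (∫ x' in {x' : ℝ | δ ≤ |x' - x|}, f x' / ((x' : ℂ) - (x : ℂ))) - P f x)
              2 volume)
          (nhdsWithin 0 (Set.Ioi 0)) (nhds 0)) ∧
      (∀ f : Lp ℂ 2 (volume : Measure ℝ), (∀ᵐ x : ℝ, (f x).im = 0) →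
        (∀ᵐ x : ℝ, Pplus f x = starRingEnd ℂ (Pminus f x))) ∧
      (∀ f : Lp ℂ 2 (volume : Measure ℝ),
        ∀ᵐ x : ℝ, f x =
          (1 / (2 * (Real.pi : ℂ) * Complex.I)) * (Pplus f x - Pminus f x)) := by
  have mp : ∀ δ : ℝ, 0 ≤ δ → MemLp (symbPlus δ) ∞ := fun δ hδ =>
    memLp_top_of_bound (measurable_symbPlus δ).aestronglyMeasurable _
      (Eventually.of_forall (norm_symbPlus_le hδ))
  have mm : ∀ δ : ℝ, 0 ≤ δ → MemLp (symbMinus δ) ∞ := fun δ hδ =>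
    memLp_top_of_bound (measurable_symbMinus δ).aestronglyMeasurable _
      (Eventually.of_forall (norm_symbMinus_le hδ))
  have mP : MemLp (symbPV 0) ∞ := by
    have h0 : symbPV 0 = fun ξ => 1 / 2 * (symbPlus 0 ξ + symbMinus 0 ξ) := by
      ext ξ; simp [symbPV, fourier_corrC_zero]
    rw [h0]
    exact ((mp 0 le_rfl).add (mm 0 le_rfl)).const_mul _
  have kp : ∀ (f : L2R) (δ x : ℝ), ∫ x' : ℝ, f x' / ((x' : ℂ) - (x : ℂ) - Complex.I * (δ : ℂ)) =
      ∫ y : ℝ, 1 / (-((x - y : ℝ) : ℂ) - Complex.I * δ) * f y := fun f δ x => by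
    congr 1; ext y; push_cast; rw [neg_sub, one_div, div_eq_inv_mul]
  have km : ∀ (f : L2R) (δ x : ℝ), ∫ x' : ℝ, f x' / ((x' : ℂ) - (x : ℂ) + Complex.I * (δ : ℂ)) =
      ∫ y : ℝ, 1 / (-((x - y : ℝ) : ℂ) + Complex.I * δ) * f y := fun f δ x => by
    congr 1; ext y; push_cast; rw [neg_sub, one_div, div_eq_inv_mul]
  have kP : ∀ (f : L2R) (δ x : ℝ),
      ∫ x' in {x' : ℝ | δ ≤ |x' - x|}, f x' / ((x' : ℂ) - (x : ℂ)) =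
      ∫ y : ℝ, (if δ ≤ |x - y| then 1 / (-((x - y : ℝ) : ℂ)) else 0) * f y := fun f δ x => by
    rw [← integral_indicator (measurableSet_le measurable_const (by fun_prop))]
    congr 1; ext y
    simp only [Set.indicator_apply, Set.mem_ofPred_eq, abs_sub_comm y x]
    split_ifs
    · push_cast; rw [neg_sub, one_div, div_eq_inv_mul]
    · simp
  have tp : ∀ f : L2R, Tendsto (fun δ : ℝ => eLpNorm (fun x : ℝ =>
      (∫ x' : ℝ, f x' / ((x' : ℂ) - (x : ℂ) - Complex.I * (δ : ℂ))) -
        multOp (symbPlus 0) (mp 0 le_rfl) f x) 2 volume) (𝓝[>] 0) (𝓝 0) := fun f => by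
    simp only [kp]
    exact tendsto_conv (2 * Real.pi) _ (fun δ hδ => isKernel_plus hδ)
      (fun δ hδ => norm_symbPlus_le hδ.le) (Eventually.of_forall tendsto_symbPlus) f
  have tm : ∀ f : L2R, Tendsto (fun δ : ℝ => eLpNorm (fun x : ℝ =>
      (∫ x' : ℝ, f x' / ((x' : ℂ) - (x : ℂ) + Complex.I * (δ : ℂ))) -
        multOp (symbMinus 0) (mm 0 le_rfl) f x) 2 volume) (𝓝[>] 0) (𝓝 0) := fun f => by
    simp only [km]
    exact tendsto_conv (2 * Real.pi) _ (fun δ hδ => isKernel_minus hδ)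
      (fun δ hδ => norm_symbMinus_le hδ.le) (Eventually.of_forall tendsto_symbMinus) f
  refine ⟨multOp (symbPlus 0) (mp 0 le_rfl), multOp (symbMinus 0) (mm 0 le_rfl),
    multOp (symbPV 0) mP, tp, tm, fun f => ?_, fun f hf => ?_, fun f => ?_⟩
  · simp only [kP]
    refine tendsto_conv (2 * Real.pi + ∫ y, ‖corrC y‖) _ (fun δ hδ => isKernel_pv hδ)
      (fun δ hδ ξ => ?_) (Eventually.of_forall fun ξ => ?_) f
    · refine (norm_add_le _ _).trans (add_le_add ?_ (norm_fourier_corrC_le _))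
      rw [norm_mul]
      have := norm_add_le (symbPlus δ ξ) (symbMinus δ ξ)
      have h1 := norm_symbPlus_le hδ.le ξ
      have h2 := norm_symbMinus_le hδ.le ξ
      norm_num
      linarith
    · refine (((tendsto_symbPlus ξ).add (tendsto_symbMinus ξ)).const_mul _).add ?_
      have : Continuous fun δ : ℝ => 𝓕 corrC (δ * ξ) :=
        continuous_fourier_corrC.comp (by fun_prop)
      exact this.continuousAt.tendsto.mono_left nhdsWithin_le_nhds
  · set u := multOp (symbPlus 0) (mp 0 le_rfl) f
    set v := multOp (symbMinus 0) (mm 0 le_rfl) f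
    have hcm : AEStronglyMeasurable fun x => conj (v x) :=
      Complex.continuous_conj.comp_aestronglyMeasurable (Lp.aestronglyMeasurable v)
    have hle : ∀ δ : ℝ, 0 < δ → eLpNorm (fun x => u x - conj (v x)) 2 volume ≤
        eLpNorm (fun x : ℝ =>
          (∫ x' : ℝ, f x' / ((x' : ℂ) - (x : ℂ) - Complex.I * (δ : ℂ))) - u x) 2 volume +
        eLpNorm (fun x : ℝ =>
          (∫ x' : ℝ, f x' / ((x' : ℂ) - (x : ℂ) + Complex.I * (δ : ℂ))) - v x) 2 volume := by
      intro δ hδ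
      have hconj : ∀ x : ℝ, ∫ x' : ℝ, f x' / ((x' : ℂ) - (x : ℂ) - Complex.I * (δ : ℂ)) =
          conj (∫ x' : ℝ, f x' / ((x' : ℂ) - (x : ℂ) + Complex.I * (δ : ℂ))) := fun x => by
        rw [← integral_conj]
        apply integral_congr_ae
        filter_upwards [hf] with y hy
        have : conj (f y) = f y := Complex.conj_eq_iff_im.mpr hy
        simp [this, sub_eq_add_neg]
      have hmeas : AEStronglyMeasurable
          fun x : ℝ => ∫ x' : ℝ, f x' / ((x' : ℂ) - (x : ℂ) - Complex.I * (δ : ℂ)) := by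
        simp only [kp]
        exact (Lp.aestronglyMeasurable _).congr
          ((isKernel_plus hδ).conv_ae (mp δ hδ.le) f).symm
      have hswap : eLpNorm (fun x : ℝ =>
          (∫ x' : ℝ, f x' / ((x' : ℂ) - (x : ℂ) + Complex.I * (δ : ℂ))) - v x) 2 volume =
          eLpNorm (fun x : ℝ => (∫ x' : ℝ, f x' / ((x' : ℂ) - (x : ℂ) - Complex.I * (δ : ℂ)))
            - conj (v x)) 2 volume := by
        apply eLpNorm_congr_norm_ae
        refine Eventually.of_forall fun x => ?_
        rw [hconj, ← map_sub, RCLike.norm_conj]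
      rw [hswap, add_comm]
      refine le_trans (le_of_eq ?_)
        (eLpNorm_sub_le (hmeas.sub hcm) (hmeas.sub (Lp.aestronglyMeasurable u)) one_le_two)
      congr 1
      ext x
      simp
    have h0 : eLpNorm (fun x => u x - conj (v x)) 2 volume ≤ 0 := by
      have := (tp f).add (tm f)
      rw [add_zero] at this
      exact ge_of_tendsto this (eventually_nhdsWithin_of_forall hle)
    have h1 := (eLpNorm_eq_zero_iff ((Lp.aestronglyMeasurable u).sub hcm) (by simp)).mp
      (le_antisymm h0 bot_le)
    filter_upwards [h1] with x hx
    exact sub_eq_zero.mp hx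
  · have hne : (2 * (Real.pi : ℂ) * Complex.I) ≠ 0 := by simp [Real.pi_ne_zero]
    have key : multOp (symbPlus 0) (mp 0 le_rfl) f - multOp (symbMinus 0) (mm 0 le_rfl) f =
        (2 * (Real.pi : ℂ) * Complex.I) • f := by
      apply (Lp.fourierTransformₗᵢ ℝ ℂ).injective
      rw [map_sub, map_smul]
      change (𝓕 (multOp (symbPlus 0) (mp 0 le_rfl) f) - 𝓕 (multOp (symbMinus 0) (mm 0 le_rfl) f) :
        L2R) = (2 * (Real.pi : ℂ) * Complex.I) • (𝓕 f : L2R)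
      apply Lp.ext
      have hξ : ∀ᵐ ξ : ℝ, ξ ≠ 0 := by simp [ae_iff]
      filter_upwards [Lp.coeFn_sub (𝓕 (multOp (symbPlus 0) (mp 0 le_rfl) f) : L2R)
        (𝓕 (multOp (symbMinus 0) (mm 0 le_rfl) f) : L2R),
        Lp.coeFn_smul (2 * (Real.pi : ℂ) * Complex.I) (𝓕 f : L2R),
        fourier_multOp _ (mp 0 le_rfl) f, fourier_multOp _ (mm 0 le_rfl) f, hξ]
        with ξ h1 h2 h3 h4 h5
      rw [h1, h2, Pi.sub_apply, h3, h4, Pi.smul_apply, smul_eq_mul, ← sub_mul]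
      congr 1
      rcases lt_or_gt_of_ne h5 with h | h
      · simp [symbPlus, symbMinus, h, h.le]
      · simp [symbPlus, symbMinus, h, h.le]
    filter_upwards [Lp.coeFn_sub (multOp (symbPlus 0) (mp 0 le_rfl) f)
      (multOp (symbMinus 0) (mm 0 le_rfl) f),
      Lp.coeFn_smul (2 * (Real.pi : ℂ) * Complex.I) f] with x h1 h2
    rw [← Pi.sub_apply, ← h1, key, h2, Pi.smul_apply, smul_eq_mul]
    field_simp
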